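/- Let h(t) = ∑_{j≥0} c_j t^j ∈ H²(𝔻) with h(0) ≠ 0, fix k ≥ 1, and define f ∈ H²(𝔻²) by f(z,w) = h(χ_k), where χ_k is the k-th monomial in degree-lexicographic order. For k, j ≥ 0 let £(k,j) denote the degree-lexicographic index of the monomial (χ_k)^j, i.e., χ_{£(k,j)} = (χ_k)^j. Then for each j ≥ 0 and each N with £(k,j) ≤ N ≤ £(k,j+1) − 1, one has p_N*[f] = p_{£(k,j)}*[f]. -/

import Mathlib

noncomputable section

open Finset

/-- Coefficients of a formal power series in two variables `z, w`
(the coefficient of `z^j w^k` is the value at `(j, k)`). -/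
abbrev Coef := ℕ × ℕ → ℂ

/-- Coefficients of a formal power series in one variable. -/
abbrev Coef1 := ℕ → ℂ

/-- Membership in the Hardy space `H²(𝔻²)`: square-summable coefficients. -/
def MemH2 (f : Coef) : Prop := Summable (fun jk : ℕ × ℕ => ‖f jk‖ ^ 2)

/-- Membership in the Hardy space `H²(𝔻)`. -/
def MemH2₁ (f : Coef1) : Prop := Summable (fun j : ℕ => ‖f j‖ ^ 2)

/-- The `H²(𝔻²)` inner product `⟨f, g⟩ = ∑ a_{jk} conj (b_{jk})`. -/
def Hinner (f g : Coef) : ℂ := ∑' jk : ℕ × ℕ, f jk * (starRingEnd ℂ) (g jk)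

/-- The `H²(𝔻²)` norm. -/
def Hnorm (f : Coef) : ℝ := Real.sqrt (∑' jk : ℕ × ℕ, ‖f jk‖ ^ 2)

/-- The `H²(𝔻)` norm. -/
def Hnorm1 (f : Coef1) : ℝ := Real.sqrt (∑' j : ℕ, ‖f j‖ ^ 2)

/-- The constant function `1` as an element of `H²(𝔻²)`. -/
def oneH : Coef := fun jk => if jk = (0, 0) then 1 else 0

/-- The constant function `1` as an element of `H²(𝔻)`. -/
def oneH1 : Coef1 := fun j => if j = 0 then 1 else 0

/-- Cauchy product `q·f` of two formal power series in two variables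
(used for multiplication of `f ∈ H²(𝔻²)` by a polynomial `q`). -/
def pmul (q f : Coef) : Coef := fun jk =>
  ∑ a ∈ range (jk.1 + 1), ∑ b ∈ range (jk.2 + 1), q (a, b) * f (jk.1 - a, jk.2 - b)

/-- Multiplication of a one-variable power series by a one-variable polynomial. -/
def pmul1 (q : Polynomial ℂ) (f : Coef1) : Coef1 := fun j =>
  ∑ a ∈ range (j + 1), q.coeff a * f (j - a)

/-- Degree-lexicographic enumeration of the monomials in `z, w`:
`chi 0 = (0,0) ↔ 1`, `chi 1 = (1,0) ↔ z`, `chi 2 = (0,1) ↔ w`,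
`chi 3 = (2,0) ↔ z²`, `chi 4 = (1,1) ↔ zw`, `chi 5 = (0,2) ↔ w²`, … -/
def chi : ℕ → ℕ × ℕ
  | 0 => (0, 0)
  | n + 1 =>
    let p := chi n
    if p.1 = 0 then (p.2 + 1, 0) else (p.1 - 1, p.2 + 1)

/-- The monomial `z^(ab.1) w^(ab.2)` as a coefficient function. -/
def mono (ab : ℕ × ℕ) : Coef := fun jk => if jk = ab then 1 else 0

/-- `p` lies in `P_n = span {χ_0, …, χ_n}`. -/
def inPn (n : ℕ) (p : Coef) : Prop := ∀ ab, p ab ≠ 0 → ∃ k ≤ n, chi k = ab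

/-- `p` is a (two-variable) polynomial: finitely many nonzero coefficients. -/
def IsPoly2 (p : Coef) : Prop := (Function.support p).Finite

/-- Evaluation of a power series at the point `(z, w)`
(absolutely convergent for `f ∈ H²(𝔻²)` and `(z,w)` in the open bidisk,
and for any polynomial at any point). -/
def heval (f : Coef) (z w : ℂ) : ℂ := ∑' jk : ℕ × ℕ, f jk * z ^ jk.1 * w ^ jk.2

/-- `p` is the `n`-th optimal polynomial approximant to `1/f`:
`p ∈ P_n` and `p` minimizes `‖qf - 1‖` over `q ∈ P_n`. -/
def IsOPA (f : Coef) (n : ℕ) (p : Coef) : Prop :=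
  inPn n p ∧ ∀ q : Coef, inPn n q →
    Hnorm (pmul p f - oneH) ≤ Hnorm (pmul q f - oneH)

/-- `q` has bidegree `(N, M)`: degree `N` in `z` and degree `M` in `w`. -/
def HasBidegree (q : Coef) (N M : ℕ) : Prop :=
  (∀ a b : ℕ, q (a, b) ≠ 0 → a ≤ N ∧ b ≤ M) ∧ (∃ b, q (N, b) ≠ 0) ∧ (∃ a, q (a, M) ≠ 0)

/-- Reflection of a polynomial of bidegree `(N, M)`:
the coefficient of `z^j w^k` is `conj` of the coefficient of `z^(N-j) w^(M-k)`. -/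
def reflPoly (N M : ℕ) (q : Coef) : Coef := fun jk =>
  if jk.1 ≤ N ∧ jk.2 ≤ M then (starRingEnd ℂ) (q (N - jk.1, M - jk.2)) else 0

/-- The degree-lexicographic index of the monomial `z^(ab.1) w^(ab.2)`
(the inverse of `chi`). -/
def lexIndex (ab : ℕ × ℕ) : ℕ := (ab.1 + ab.2) * (ab.1 + ab.2 + 1) / 2 + ab.2

/-- `pound k j` = the degree-lexicographic index `£(k,j)` of the monomial `(χ_k)^j`. -/
def pound (k j : ℕ) : ℕ := lexIndex (j * (chi k).1, j * (chi k).2)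

/-- The linear factor `z - α` as a coefficient function. -/
def linZ (α : ℂ) : Coef := fun jk => if jk = (1, 0) then 1 else if jk = (0, 0) then -α else 0

/-- The linear factor `w - β` as a coefficient function. -/
def linW (β : ℂ) : Coef := fun jk => if jk = (0, 1) then 1 else if jk = (0, 0) then -β else 0

/-!
Write `S` for the set of exponents of the powers of `χ_k`. It is closed under addition and under
those differences that are defined, so discarding from `q` the monomials outside `S` commutes with
multiplication by a series `f` supported on `S`. Since `1` is supported on `S` too, this truncation
can only decrease `‖q f - 1‖`. Optimal approximants are unique, because `H²` is strictly convex
and power series form an integral domain; hence each of them is supported on `S`. No power of `χ_k`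
has an index strictly between `£(k,j)` and `£(k,j+1)`, so `p_N*[f]` already lies in `P_£(k,j)`.
-/

section DegreeLexicographicOrder

theorem lexIndex_succ_zero (b : ℕ) : lexIndex (b + 1, 0) = lexIndex (0, b) + 1 := by
  have triangle : (b + 1 + 0) * (b + 1 + 0 + 1) = (0 + b) * (0 + b + 1) + 2 * (b + 1) := by ring
  simp only [lexIndex, triangle]
  lia

theorem lexIndex_succ_right (a b : ℕ) : lexIndex (a, b + 1) = lexIndex (a + 1, b) + 1 := by
  simp only [lexIndex, add_assoc, add_comm 1 b]

theorem lexIndex_chi (n : ℕ) : lexIndex (chi n) = n := by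
  induction n with
  | zero => rfl
  | succ n ih =>
    rw [chi]
    rcases hn : chi n with ⟨_ | a, b⟩ <;> rw [hn] at ih
    · simp [lexIndex_succ_zero, ih]
    · simp [lexIndex_succ_right, ih]

theorem lexIndex_monotone : Monotone lexIndex := by
  rintro ⟨a, b⟩ ⟨c, d⟩ ⟨hac, hbd⟩
  simp only [lexIndex] at hac hbd ⊢
  gcongr

theorem pound_eq_lexIndex_nsmul (k j : ℕ) : pound k j = lexIndex (j • chi k) := rfl

theorem pound_monotone (k : ℕ) : Monotone (pound k) := fun _ _ hij =>
  lexIndex_monotone (nsmul_le_nsmul_left zero_le hij)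

theorem le_pound_of_chi_mem_multiples {k j n : ℕ} (hn : n < pound k (j + 1))
    (hmem : chi n ∈ AddSubmonoid.multiples (chi k)) : n ≤ pound k j := by
  obtain ⟨i, hi : i • chi k = chi n⟩ := hmem
  have hni : n = pound k i := by rw [pound_eq_lexIndex_nsmul, hi, lexIndex_chi]
  subst hni
  exact pound_monotone k (Nat.lt_succ_iff.mp ((pound_monotone k).reflect_lt hn))

end DegreeLexicographicOrder

theorem mem_multiples_of_add_mem {M : Type*} [AddCommMonoid M] [PartialOrder M]
    [CanonicallyOrderedAdd M] [IsCancelAdd M] {v a s : M}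
    (hs : s ∈ AddSubmonoid.multiples v) (has : a + s ∈ AddSubmonoid.multiples v) :
    a ∈ AddSubmonoid.multiples v := by
  obtain ⟨i, rfl⟩ := hs
  obtain ⟨j, hj : j • v = a + i • v⟩ := has
  rcases le_total i j with hij | hji
  · have ha : (j - i) • v = a := by
      refine add_right_cancel (b := i • v) ?_
      rw [← add_nsmul, Nat.sub_add_cancel hij, hj]
    exact ⟨j - i, ha⟩
  · have ha : a + (i - j) • v = 0 := by
      refine add_right_cancel (b := j • v) ?_
      rw [add_assoc, ← add_nsmul, Nat.sub_add_cancel hji, zero_add, hj]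
    exact (add_eq_zero.mp ha).1 ▸ zero_mem _

section Polynomials

variable {p q : Coef} {M N : ℕ}

theorem inPn.mono (hp : inPn M p) (hMN : M ≤ N) : inPn N p := fun x hx =>
  let ⟨n, hn, hnx⟩ := hp x hx
  ⟨n, hn.trans hMN, hnx⟩

theorem inPn.add (hp : inPn N p) (hq : inPn N q) : inPn N (p + q) := fun x hx => by
  rcases not_and_or.mp fun h : p x = 0 ∧ q x = 0 => hx (by simp [h.1, h.2]) with h | h
  exacts [hp x h, hq x h]

theorem inPn.const_smul {R : Type*} [SMulZeroClass R ℂ] (hp : inPn N p) (c : R) :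
    inPn N (c • p) := fun x hx =>
  hp x fun h => hx (by simp [h])

theorem inPn.indicator (hp : inPn N p) (S : Set (ℕ × ℕ)) : inPn N (S.indicator p) := fun x hx =>
  hp x fun h => hx (by simp [h])

theorem inPn.isPoly2 (hp : inPn N p) : IsPoly2 p :=
  ((Set.finite_Iic N).image chi).subset hp

theorem inPn.of_support_subset_multiples {k j : ℕ} (hp : inPn N p) (hN : N < pound k (j + 1))
    (hS : p.support ⊆ AddSubmonoid.multiples (chi k)) : inPn (pound k j) p := fun x hx => by
  obtain ⟨n, hn, rfl⟩ := hp x hx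
  exact ⟨n, le_pound_of_chi_mem_multiples (hn.trans_lt hN) (hS hx), rfl⟩

end Polynomials

section CauchyProduct

theorem pmul_apply (q f : Coef) (x : ℕ × ℕ) :
    pmul q f x = ∑ s ∈ Iic x, q s * f (x - s) := by
  rw [← Finset.Iic_product_Iic, Finset.sum_product]
  simp only [pmul, Nat.range_succ_eq_Iic]
  rfl

/-- Cauchy multiplication by a fixed power series, as a linear map in the other factor. -/
def pmulRight (f : Coef) : Coef →ₗ[ℂ] Coef where
  toFun q := pmul q f
  map_add' p q := by
    ext x
    simp only [pmul_apply, Pi.add_apply, add_mul, Finset.sum_add_distrib]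
  map_smul' c q := by
    ext x
    simp only [pmul_apply, Pi.smul_apply, smul_eq_mul, mul_assoc, Finset.mul_sum, RingHom.id_apply]

theorem pmulRight_apply (q f : Coef) : pmulRight f q = pmul q f := rfl

theorem pmul_mono_add (s x : ℕ × ℕ) (f : Coef) : pmul (mono s) f (x + s) = f x := by
  rw [pmul_apply, Finset.sum_eq_single_of_mem s (by simp)]
  · simp [mono]
  · intro t _ hts
    simp [mono, hts]

theorem pmul_mono_of_not_le {s x : ℕ × ℕ} (h : ¬s ≤ x) (f : Coef) : pmul (mono s) f x = 0 := by
  rw [pmul_apply]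
  refine Finset.sum_eq_zero fun t ht => ?_
  have hts : t ≠ s := fun hts => h (hts ▸ Finset.mem_Iic.mp ht)
  simp [mono, hts]

theorem IsPoly2.eq_sum_mono {q : Coef} (hq : IsPoly2 q) :
    q = ∑ s ∈ hq.toFinset, q s • mono s := by
  ext x
  simp only [Finset.sum_apply, Pi.smul_apply, mono, smul_eq_mul, mul_ite, mul_one, mul_zero,
    Finset.sum_ite_eq]
  split_ifs with hx
  · rfl
  · exact Function.notMem_support.mp fun h => hx (hq.mem_toFinset.mpr h)

theorem pmul_indicator {S : AddSubmonoid (ℕ × ℕ)}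
    (hS : ∀ ⦃a s⦄, s ∈ S → a + s ∈ S → a ∈ S) {f : Coef} (hf : f.support ⊆ S) (q : Coef) :
    pmul (Set.indicator S q) f = Set.indicator S (pmul q f) := by
  classical
  ext x
  have mem_iff {s : ℕ × ℕ} (hs : s ≤ x) (hfs : f (x - s) ≠ 0) : s ∈ S ↔ x ∈ S := by
    have hxs : s + (x - s) = x := add_tsub_cancel_of_le hs
    exact ⟨fun h => hxs ▸ add_mem h (hf hfs), fun h => hS (hf hfs) (hxs.symm ▸ h)⟩
  have term_eq {s : ℕ × ℕ} (hs : s ≤ x) :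
      Set.indicator S q s * f (x - s) = if x ∈ S then q s * f (x - s) else 0 := by
    by_cases hfs : f (x - s) = 0
    · simp [hfs]
    · simp [Set.indicator_apply, mem_iff hs hfs]
  rw [pmul_apply, Finset.sum_congr rfl fun s hs => term_eq (Finset.mem_Iic.mp hs)]
  by_cases hx : x ∈ S <;> simp [hx, pmul_apply]

theorem indicator_oneH (S : AddSubmonoid (ℕ × ℕ)) : Set.indicator S oneH = oneH := by
  refine Set.indicator_eq_self.mpr fun x hx => ?_
  rw [show x = 0 by by_contra h; exact hx (if_neg h)]
  exact S.zero_mem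

open PowerSeries in
/-- A coefficient array read as a power series in `z` over `ℂ⟦w⟧`, which makes the integral domain
structure of iterated power series rings available. -/
def toPowerSeries (f : Coef) : ℂ⟦X⟧⟦X⟧ := .mk fun a => .mk fun b => f (a, b)

theorem toPowerSeries_pmul (q f : Coef) :
    toPowerSeries (pmul q f) = toPowerSeries q * toPowerSeries f := by
  ext a b
  simp only [toPowerSeries, pmul, PowerSeries.coeff_mk, PowerSeries.coeff_mul, map_sum,
    Finset.Nat.sum_antidiagonal_eq_sum_range_succ_mk]

theorem toPowerSeries_eq_zero {f : Coef} : toPowerSeries f = 0 ↔ f = 0 := by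
  simp [toPowerSeries, PowerSeries.ext_iff, funext_iff]

theorem pmul_eq_zero {q f : Coef} : pmul q f = 0 ↔ q = 0 ∨ f = 0 := by
  simp only [← toPowerSeries_eq_zero, toPowerSeries_pmul, mul_eq_zero]

theorem pmulRight_injective {f : Coef} (hf : f ≠ 0) : Function.Injective (pmulRight f) :=
  (injective_iff_map_eq_zero _).mpr fun _ hq => (pmul_eq_zero.mp hq).resolve_right hf

end CauchyProduct

section HardySpace

theorem memH2_iff_memℓp {f : Coef} : MemH2 f ↔ Memℓp f 2 := by
  simp [MemH2, memℓp_gen_iff]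

theorem Hnorm_coe (f : lp (fun _ : ℕ × ℕ => ℂ) 2) : Hnorm f = ‖f‖ := by
  simp [Hnorm, lp.norm_eq_tsum_rpow, Real.sqrt_eq_rpow]

theorem Hnorm_le_of_norm_le {f g : Coef} (hf : MemH2 f) (hgf : ∀ x, ‖g x‖ ≤ ‖f x‖) :
    Hnorm g ≤ Hnorm f := by
  have hsq (x) : ‖g x‖ ^ 2 ≤ ‖f x‖ ^ 2 := by gcongr; exact hgf x
  exact Real.sqrt_le_sqrt
    ((hf.of_nonneg_of_le (fun _ => by positivity) hsq).tsum_le_tsum hsq hf)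

theorem Hnorm_midpoint_lt {f g : Coef} (hf : MemH2 f) (hg : MemH2 g) (hfg : Hnorm f = Hnorm g)
    (hne : f ≠ g) : Hnorm ((1 / 2 : ℝ) • (f + g)) < Hnorm f := by
  obtain ⟨f, rfl⟩ : ∃ F : lp (fun _ : ℕ × ℕ => ℂ) 2, F = f := ⟨⟨f, memH2_iff_memℓp.mp hf⟩, rfl⟩
  obtain ⟨g, rfl⟩ : ∃ G : lp (fun _ : ℕ × ℕ => ℂ) 2, G = g := ⟨⟨g, memH2_iff_memℓp.mp hg⟩, rfl⟩
  simp only [← lp.coeFn_add, ← lp.coeFn_smul, Hnorm_coe] at hfg ⊢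
  exact (norm_midpoint_lt_iff hfg).mpr fun h => hne (congrArg _ h)

theorem MemH2.sub {f g : Coef} (hf : MemH2 f) (hg : MemH2 g) : MemH2 (f - g) :=
  memH2_iff_memℓp.mpr ((memH2_iff_memℓp.mp hf).sub (memH2_iff_memℓp.mp hg))

theorem memH2_oneH : MemH2 oneH :=
  summable_of_ne_finset_zero (s := {(0, 0)}) fun x hx => by
    simp [oneH, Finset.mem_singleton.not.mp hx]

theorem memH2_pmul_mono {f : Coef} (hf : MemH2 f) (s : ℕ × ℕ) : MemH2 (pmul (mono s) f) := by
  rw [MemH2, ← (add_left_injective s).summable_iff]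
  · simp only [Function.comp_def, pmul_mono_add]
    exact hf
  · intro x hx
    have hsx : ¬s ≤ x := fun h => hx ⟨x - s, tsub_add_cancel_of_le h⟩
    simp [pmul_mono_of_not_le hsx]

theorem memH2_pmul {q f : Coef} (hq : IsPoly2 q) (hf : MemH2 f) : MemH2 (pmul q f) := by
  have hsum : pmul q f = ∑ s ∈ hq.toFinset, q s • pmul (mono s) f := by
    simpa only [map_sum, map_smul, pmulRight_apply] using congrArg (pmulRight f) hq.eq_sum_mono
  rw [hsum, Finset.sum_fn, memH2_iff_memℓp]
  refine Memℓp.finsetSum _ fun s _ => ?_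
  exact (memH2_iff_memℓp.mp (memH2_pmul_mono hf s)).const_smul (q s)

end HardySpace

section OptimalApproximants

variable {f p q : Coef} {M N : ℕ}

theorem inPn.memH2_pmul_sub_oneH (hf : MemH2 f) (hq : inPn N q) : MemH2 (pmul q f - oneH) :=
  (memH2_pmul hq.isPoly2 hf).sub memH2_oneH

theorem pmul_midpoint_sub_oneH (p q f : Coef) :
    pmul ((1 / 2 : ℝ) • (p + q)) f - oneH
      = (1 / 2 : ℝ) • ((pmul p f - oneH) + (pmul q f - oneH)) := by
  simp only [← pmulRight_apply, LinearMap.map_smul_of_tower, map_add]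
  module

theorem IsOPA.unique (hf : MemH2 f) (hf0 : f ≠ 0) (hp : IsOPA f N p) (hq : IsOPA f N q) :
    p = q := by
  have hnorm : Hnorm (pmul p f - oneH) = Hnorm (pmul q f - oneH) :=
    (hp.2 q hq.1).antisymm (hq.2 p hp.1)
  by_contra hpq
  have herr : pmul p f - oneH ≠ pmul q f - oneH := fun h =>
    hpq (pmulRight_injective hf0 (sub_left_injective h))
  have hlt := Hnorm_midpoint_lt (hp.1.memH2_pmul_sub_oneH hf) (hq.1.memH2_pmul_sub_oneH hf)
    hnorm herr
  rw [← pmul_midpoint_sub_oneH] at hlt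
  exact (hp.2 _ ((hp.1.add hq.1).const_smul _)).not_gt hlt

theorem IsOPA.of_le (hp : IsOPA f N p) (hMN : M ≤ N) (hpM : inPn M p) : IsOPA f M p :=
  ⟨hpM, fun q hq => hp.2 q (hq.mono hMN)⟩

variable {S : AddSubmonoid (ℕ × ℕ)}

theorem IsOPA.indicator (hf : MemH2 f) (hS : ∀ ⦃a s⦄, s ∈ S → a + s ∈ S → a ∈ S)
    (hfS : f.support ⊆ S) (hp : IsOPA f N p) : IsOPA f N (Set.indicator S p) := by
  have herr : pmul (Set.indicator S p) f - oneH = Set.indicator S (pmul p f - oneH) := by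
    rw [Set.indicator_sub', pmul_indicator hS hfS, indicator_oneH]
  have hle : Hnorm (pmul (Set.indicator S p) f - oneH) ≤ Hnorm (pmul p f - oneH) := by
    rw [herr]
    exact Hnorm_le_of_norm_le (hp.1.memH2_pmul_sub_oneH hf) fun x =>
      norm_indicator_le_norm_self _ x
  exact ⟨hp.1.indicator S, fun q hq => hle.trans (hp.2 q hq)⟩

theorem IsOPA.support_subset (hf : MemH2 f) (hf0 : f ≠ 0)
    (hS : ∀ ⦃a s⦄, s ∈ S → a + s ∈ S → a ∈ S) (hfS : f.support ⊆ S) (hp : IsOPA f N p) :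
    p.support ⊆ S :=
  Set.indicator_eq_self.mp ((hp.indicator hf hS hfS).unique hf hf0 hp)

end OptimalApproximants

theorem statement13_general (k : ℕ) {f : Coef} (hf : MemH2 f) (hf0 : f ≠ 0)
    (hfS : f.support ⊆ AddSubmonoid.multiples (chi k)) {j N : ℕ} (hjN : pound k j ≤ N)
    (hN : N < pound k (j + 1)) {p pN : Coef} (hp : IsOPA f (pound k j) p) (hpN : IsOPA f N pN) :
    pN = p := by
  have hpNS : pN.support ⊆ AddSubmonoid.multiples (chi k) :=
    hpN.support_subset hf hf0 (fun _ _ => mem_multiples_of_add_mem) hfS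
  have hpN' : IsOPA f (pound k j) pN :=
    hpN.of_le hjN (hpN.1.of_support_subset_multiples hN hpNS)
  exact hpN'.unique hf hf0 hp

/-- Let `h ∈ H²(𝔻)` with `h(0) ≠ 0`, let `k ≥ 1`, and let
`f(z,w) = h(χ_k) ∈ H²(𝔻²)`. Then for each `j ≥ 0` and each `N` with
`£(k,j) ≤ N ≤ £(k,j+1) - 1`, one has `p_N*[f] = p_{£(k,j)}*[f]`. -/
theorem statement13 (h : Coef1) (hh : MemH2₁ h) (hh0 : h 0 ≠ 0)
    (k : ℕ) (hk : 1 ≤ k) (f : Coef) (hfH2 : MemH2 f)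
    (hval : ∀ j : ℕ, f (j * (chi k).1, j * (chi k).2) = h j)
    (hsupp : ∀ ab : ℕ × ℕ, f ab ≠ 0 → ∃ j : ℕ, ab = (j * (chi k).1, j * (chi k).2)) :
    ∀ j N : ℕ, pound k j ≤ N → N < pound k (j + 1) →
      ∀ p pN : Coef, IsOPA f (pound k j) p → IsOPA f N pN → pN = p := by
  have hf0 : f ≠ 0 := fun hf => hh0 (by simp [← hval 0, hf])
  exact fun j N hjN hN p pN => statement13_general k hfH2 hf0
    (fun x hx => (hsupp x hx).imp fun _ h => h.symm) hjN hN
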